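/- arXiv:1907.01225 — 3 statements merged into one kernel-verified Lean document; each statement's English description precedes it below -/
import Mathlib

section
/- Let Λ : ℝ → ℝ satisfy hypotheses (H) and fix p ∈ ℝ. Then the function h_p(δ) = Λ(δ)(δ − p) is increasing on (−∞, δ̃*(p)] and decreasing on [δ̃*(p), +∞), where δ̃*(p) is its unique global maximizer on ℝ. -/
/-- Hypotheses (H) on an intensity function `Λ`. -/
def HypH (Λ : ℝ → ℝ) : Prop :=
  ContDiff ℝ 2 Λ ∧ StrictAnti Λ ∧ (∀ δ : ℝ, deriv Λ δ < 0) ∧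
    Filter.Tendsto Λ Filter.atTop (nhds 0) ∧
    ∃ c : ℝ, c < 2 ∧ ∀ δ : ℝ, Λ δ * iteratedDeriv 2 Λ δ / (deriv Λ δ) ^ 2 ≤ c

/-!
The derivative of `δ ↦ Λ δ * (δ - p)` factors as `Λ' δ * (φ δ - p)` with `φ δ = δ + Λ δ / Λ' δ`.
Since `φ' = 2 - Λ * Λ'' / Λ' ^ 2 > 0`, the factor `φ - p` is strictly increasing; it vanishes at the
maximizer, so it is negative before and positive after it, while `Λ'` is negative throughout.
-/

open Set

section Derivatives

variable {𝕜 : Type*} [NontriviallyNormedField 𝕜] {Λ : 𝕜 → 𝕜} {x : 𝕜}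

/-- The virtual value `φ` of the demand curve `Λ`: the price `p` at which `x` is a critical point of
the profit `δ ↦ Λ δ * (δ - p)`. It is meaningful only where `deriv Λ x ≠ 0`. -/
noncomputable def virtualValue (Λ : 𝕜 → 𝕜) (x : 𝕜) : 𝕜 :=
  x + Λ x / deriv Λ x

theorem hasDerivAt_mul_sub_const (hx : deriv Λ x ≠ 0) (p : 𝕜) :
    HasDerivAt (fun δ ↦ Λ δ * (δ - p)) (deriv Λ x * (virtualValue Λ x - p)) x := by
  have hΛ : HasDerivAt Λ (deriv Λ x) x := (differentiableAt_of_deriv_ne_zero hx).hasDerivAt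
  refine (hΛ.mul ((hasDerivAt_id' x).sub_const p)).congr_deriv ?_
  rw [virtualValue]
  field_simp
  ring

theorem continuousOn_mul_sub_const {D : Set 𝕜} (hΛ : ∀ x ∈ D, deriv Λ x ≠ 0) (p : 𝕜) :
    ContinuousOn (fun δ ↦ Λ δ * (δ - p)) D := fun x hx ↦
  (hasDerivAt_mul_sub_const (hΛ x hx) p).continuousAt.continuousWithinAt

theorem deriv_mul_sub_const_eq_zero_iff (hx : deriv Λ x ≠ 0) {p : 𝕜} :
    deriv (fun δ ↦ Λ δ * (δ - p)) x = 0 ↔ virtualValue Λ x = p := by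
  rw [(hasDerivAt_mul_sub_const hx p).deriv, mul_eq_zero, or_iff_right hx, sub_eq_zero]

theorem hasDerivAt_virtualValue (hx : deriv Λ x ≠ 0) (hΛ' : DifferentiableAt 𝕜 (deriv Λ) x) :
    HasDerivAt (virtualValue Λ) (2 - Λ x * iteratedDeriv 2 Λ x / deriv Λ x ^ 2) x := by
  have hΛ : HasDerivAt Λ (deriv Λ x) x := (differentiableAt_of_deriv_ne_zero hx).hasDerivAt
  have hΛ'' : HasDerivAt (deriv Λ) (iteratedDeriv 2 Λ x) x := by
    simpa only [iteratedDeriv_succ, iteratedDeriv_zero] using hΛ'.hasDerivAt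
  refine ((hasDerivAt_id' x).add (hΛ.div hΛ'' hx)).congr_deriv ?_
  field_simp
  ring

end Derivatives

section Monotonicity

variable {Λ : ℝ → ℝ} {D : Set ℝ} {x₀ : ℝ}

theorem strictMonoOn_virtualValue (hD : Convex ℝ D) (hΛ : ∀ x ∈ D, deriv Λ x ≠ 0)
    (hΛ' : ∀ x ∈ D, DifferentiableAt ℝ (deriv Λ) x)
    (hlt : ∀ x ∈ D, Λ x * iteratedDeriv 2 Λ x / deriv Λ x ^ 2 < 2) :
    StrictMonoOn (virtualValue Λ) D := by
  have hφ := fun x hx ↦ hasDerivAt_virtualValue (hΛ x hx) (hΛ' x hx)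
  refine strictMonoOn_of_deriv_pos hD (fun x hx ↦ (hφ x hx).continuousAt.continuousWithinAt) ?_
  intro x hx
  rw [(hφ x (interior_subset hx)).deriv]
  exact sub_pos.2 (hlt x (interior_subset hx))

theorem strictMonoOn_mul_sub_virtualValue (hD : Convex ℝ D) (hΛ : ∀ x ∈ D, deriv Λ x < 0)
    (hφ : StrictMonoOn (virtualValue Λ) D) (hx₀ : x₀ ∈ D) :
    StrictMonoOn (fun δ ↦ Λ δ * (δ - virtualValue Λ x₀)) (D ∩ Iic x₀) := by
  refine strictMonoOn_of_deriv_pos (hD.inter (convex_Iic x₀))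
    (continuousOn_mul_sub_const (fun x hx ↦ (hΛ x hx.1).ne) _) fun x hx ↦ ?_
  rw [interior_inter, interior_Iic] at hx
  obtain ⟨hxD, hlt⟩ : x ∈ D ∧ x < x₀ := ⟨interior_subset hx.1, hx.2⟩
  rw [(hasDerivAt_mul_sub_const (hΛ x hxD).ne _).deriv]
  exact mul_pos_of_neg_of_neg (hΛ x hxD) (sub_neg.2 (hφ hxD hx₀ hlt))

theorem strictAntiOn_mul_sub_virtualValue (hD : Convex ℝ D) (hΛ : ∀ x ∈ D, deriv Λ x < 0)
    (hφ : StrictMonoOn (virtualValue Λ) D) (hx₀ : x₀ ∈ D) :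
    StrictAntiOn (fun δ ↦ Λ δ * (δ - virtualValue Λ x₀)) (D ∩ Ici x₀) := by
  refine strictAntiOn_of_deriv_neg (hD.inter (convex_Ici x₀))
    (continuousOn_mul_sub_const (fun x hx ↦ (hΛ x hx.1).ne) _) fun x hx ↦ ?_
  rw [interior_inter, interior_Ici] at hx
  obtain ⟨hxD, hlt⟩ : x ∈ D ∧ x₀ < x := ⟨interior_subset hx.1, hx.2⟩
  rw [(hasDerivAt_mul_sub_const (hΛ x hxD).ne _).deriv]
  exact mul_neg_of_neg_of_pos (hΛ x hxD) (sub_pos.2 (hφ hx₀ hxD hlt))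

theorem h_p_monotone_around_maximizer_general (hD : Convex ℝ D) (hΛ : ∀ x ∈ D, deriv Λ x < 0)
    (hΛ' : ∀ x ∈ D, DifferentiableAt ℝ (deriv Λ) x)
    (hlt : ∀ x ∈ D, Λ x * iteratedDeriv 2 Λ x / deriv Λ x ^ 2 < 2)
    {p : ℝ} (hx₀ : x₀ ∈ D) (hcrit : deriv (fun δ ↦ Λ δ * (δ - p)) x₀ = 0) :
    StrictMonoOn (fun δ ↦ Λ δ * (δ - p)) (D ∩ Iic x₀) ∧
      StrictAntiOn (fun δ ↦ Λ δ * (δ - p)) (D ∩ Ici x₀) := by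
  have hφ := strictMonoOn_virtualValue hD (fun x hx ↦ (hΛ x hx).ne) hΛ' hlt
  obtain rfl := (deriv_mul_sub_const_eq_zero_iff (hΛ x₀ hx₀).ne).1 hcrit
  exact ⟨strictMonoOn_mul_sub_virtualValue hD hΛ hφ hx₀,
    strictAntiOn_mul_sub_virtualValue hD hΛ hφ hx₀⟩

end Monotonicity

theorem HypH.differentiable_deriv {Λ : ℝ → ℝ} (hΛ : HypH Λ) : Differentiable ℝ (deriv Λ) := by
  simpa only [iteratedDeriv_one] using hΛ.1.differentiable_iteratedDeriv 1 (by norm_num)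

theorem HypH.mul_iteratedDeriv_two_div_lt_two {Λ : ℝ → ℝ} (hΛ : HypH Λ) (x : ℝ) :
    Λ x * iteratedDeriv 2 Λ x / deriv Λ x ^ 2 < 2 := by
  obtain ⟨-, -, -, -, c, hc, hle⟩ := hΛ
  exact (hle x).trans_lt hc

/-- For fixed `p`, the function `h_p(δ) = Λ(δ)(δ − p)` is increasing on `(−∞, δ̃*(p)]`
and decreasing on `[δ̃*(p), +∞)`, where `δ̃*(p)` is its unique global maximizer. -/
theorem h_p_monotone_around_maximizer
    (Λ : ℝ → ℝ) (hΛ : HypH Λ) (p : ℝ) (δs : ℝ)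
    (hmax : ∀ δ : ℝ, Λ δ * (δ - p) ≤ Λ δs * (δs - p))
    (huniq : ∀ δ' : ℝ, (∀ δ : ℝ, Λ δ * (δ - p) ≤ Λ δ' * (δ' - p)) → δ' = δs) :
    StrictMonoOn (fun δ : ℝ => Λ δ * (δ - p)) (Set.Iic δs) ∧
    StrictAntiOn (fun δ : ℝ => Λ δ * (δ - p)) (Set.Ici δs) := by
  have hcrit : deriv (fun δ ↦ Λ δ * (δ - p)) δs = 0 :=
    IsLocalMax.deriv_eq_zero (Filter.Eventually.of_forall hmax)
  simpa only [univ_inter] using h_p_monotone_around_maximizer_general convex_univ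
    (fun x _ ↦ hΛ.2.2.1 x) (fun x _ ↦ hΛ.differentiable_deriv x)
    (fun x _ ↦ hΛ.mul_iteratedDeriv_two_div_lt_two x) (mem_univ δs) hcrit
end

section
/- Under the standing assumptions (H^{i,b}, H^{i,a} : ℝ → ℝ globally Lipschitz with constants L^{i,b}, L^{i,a}; μ^{i,b}, μ^{i,a} probability measures on (0,+∞) with finite p-th moments; π : ℝᵈ → ℝ₊ continuous with π(q) ≤ C(1+‖q‖ᵖ) and (1+π(q+y))/(1+π(q)) ≤ C(1+‖y‖ᵖ); ψ ∈ C_π), the map F : C_π → C_π defined by F(u)(q) = ψ(q) − Σᵢ ∫₀^∞ z H^{i,b}((u(q) − u(q+z eⁱ))/z) μ^{i,b}(dz) − Σᵢ ∫₀^∞ z H^{i,a}((u(q) − u(q−z eⁱ))/z) μ^{i,a}(dz) is Lipschitz continuous: there exists K > 0 such that ‖F(u) − F(v)‖_π ≤ K ‖u − v‖_π for all u, v ∈ C_π. -/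
open MeasureTheory

/-- Membership in the weighted space `C_π`. -/
def InCpi {d : ℕ} (π : EuclideanSpace ℝ (Fin d) → ℝ)
    (u : EuclideanSpace ℝ (Fin d) → ℝ) : Prop :=
  Continuous u ∧ ∃ M : ℝ, ∀ q, |u q| ≤ M * (1 + π q)

/-- The weighted norm `‖u‖_π = sup_q |u(q)|/(1+π(q))`. -/
noncomputable def normPi {d : ℕ} (π : EuclideanSpace ℝ (Fin d) → ℝ)
    (u : EuclideanSpace ℝ (Fin d) → ℝ) : ℝ :=
  ⨆ q, |u q| / (1 + π q)

/-- The operator `F` of the integro-differential Hamilton–Jacobi equation. -/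
noncomputable def Fop (d : ℕ) (ψ : EuclideanSpace ℝ (Fin d) → ℝ)
    (Hb Ha : Fin d → ℝ → ℝ) (μb μa : Fin d → Measure ℝ)
    (u : EuclideanSpace ℝ (Fin d) → ℝ) (q : EuclideanSpace ℝ (Fin d)) : ℝ :=
  ψ q
    - ∑ i : Fin d,
        ∫ z : ℝ, z * Hb i ((u q - u (q + z • EuclideanSpace.single i (1 : ℝ))) / z) ∂(μb i)
    - ∑ i : Fin d,
        ∫ z : ℝ, z * Ha i ((u q - u (q - z • EuclideanSpace.single i (1 : ℝ))) / z) ∂(μa i)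

/-!
For an `L`-Lipschitz function `H`, the factors `z` and `1 / z` in `z * H (a / z)` cancel in
differences, so `a ↦ z * H (a / z)` is `L`-Lipschitz *uniformly in `z`*. Each integral term of `F`
is therefore `L`-Lipschitz in the `L¹(μ)` norm of the increment `z ↦ u q - u (q ± z eⁱ)`. If
`|u| ≤ N (1 + π)`, this norm is at most `N (1 + π q)` times the integral of `z ↦ 1 + g (± z eⁱ)`,
where `g` bounds the growth of the weight under translation. Hence `F` is Lipschitz for any weight
whose growth factor `g` is integrable along the jumps; here `g y = C (1 + ‖y‖ ^ p)`.
-/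

/-- The perspective `(z, a) ↦ z H(a / z)` of a function `H`, which is the integrand of the operator
`F`. Since `a / 0 = 0`, it vanishes at `z = 0`. -/
noncomputable def perspective (H : ℝ → ℝ) (z a : ℝ) : ℝ :=
  z * H (a / z)

section Perspective

variable {α : Type*} [MeasurableSpace α] {μ : Measure α} {H : ℝ → ℝ} {L : NNReal}
  {Z f g : α → ℝ}

lemma abs_perspective_sub_le (hH : LipschitzWith L H) (z a b : ℝ) :
    |perspective H z a - perspective H z b| ≤ L * |a - b| := by
  rcases eq_or_ne z 0 with rfl | hz
  · simp only [perspective, zero_mul, sub_zero, abs_zero]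
    positivity
  · have hz' : |z| ≠ 0 := abs_ne_zero.mpr hz
    have hdist : |H (a / z) - H (b / z)| ≤ L * (|a - b| / |z|) := by
      simpa only [Real.dist_eq, ← sub_div, abs_div] using hH.dist_le_mul (a / z) (b / z)
    calc |perspective H z a - perspective H z b|
        = |z| * |H (a / z) - H (b / z)| := by rw [perspective, perspective, ← mul_sub, abs_mul]
      _ ≤ |z| * (L * (|a - b| / |z|)) := by gcongr
      _ = L * |a - b| := by field_simp

lemma abs_perspective_le (hH : LipschitzWith L H) (z a : ℝ) :
    |perspective H z a| ≤ |z| * |H 0| + L * |a| := by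
  have hzero : perspective H z 0 = z * H 0 := by rw [perspective, zero_div]
  have hsub := abs_perspective_sub_le hH z a 0
  rw [hzero, sub_zero] at hsub
  calc |perspective H z a|
      ≤ |z * H 0| + |perspective H z a - z * H 0| := by
        linarith [abs_sub_abs_le_abs_sub (perspective H z a) (z * H 0)]
    _ ≤ |z| * |H 0| + L * |a| := by
        rw [abs_mul]
        gcongr

lemma integrable_perspective (hH : LipschitzWith L H) (hZ : Integrable Z μ)
    (hf : Integrable f μ) : Integrable (fun x ↦ perspective H (Z x) (f x)) μ := by
  have hmeas : AEMeasurable (fun x ↦ perspective H (Z x) (f x)) μ :=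
    hZ.aemeasurable.mul
      (hH.continuous.measurable.comp_aemeasurable (hf.aemeasurable.div hZ.aemeasurable))
  exact ((hZ.abs.mul_const |H 0|).add (hf.abs.const_mul (L : ℝ))).mono'
    hmeas.aestronglyMeasurable (.of_forall fun x ↦ abs_perspective_le hH (Z x) (f x))

lemma abs_integral_perspective_sub_le (hH : LipschitzWith L H) (hZ : Integrable Z μ)
    (hf : Integrable f μ) (hg : Integrable g μ) :
    |∫ x, perspective H (Z x) (f x) ∂μ - ∫ x, perspective H (Z x) (g x) ∂μ| ≤
      L * ∫ x, |f x - g x| ∂μ := by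
  rw [← integral_sub (integrable_perspective hH hZ hf) (integrable_perspective hH hZ hg),
    ← integral_const_mul, ← Real.norm_eq_abs]
  have hfg : Integrable (fun x ↦ |f x - g x|) μ := (hf.sub hg).abs
  exact norm_integral_le_of_norm_le (hfg.const_mul (L : ℝ))
    (.of_forall fun x ↦ abs_perspective_sub_le hH (Z x) (f x) (g x))

end Perspective

/-- The jump term `∫ Z H((u(q) - u(q + J)) / Z) dμ` of the operator `F`, with jumps `J` and
sizes `Z` indexed by an arbitrary measure space. The two families of integrals in `F` are the cases
`Z z = z` and `J z = z eⁱ`, respectively `J z = -z eⁱ`. -/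
noncomputable def jumpHamiltonian {α E : Type*} [MeasurableSpace α] [Add E] (H : ℝ → ℝ)
    (μ : Measure α) (Z : α → ℝ) (J : α → E) (u : E → ℝ) (q : E) : ℝ :=
  ∫ x, perspective H (Z x) (u q - u (q + J x)) ∂μ

lemma integrable_const_mul_one_add {α : Type*} [MeasurableSpace α] {μ : Measure α}
    [IsFiniteMeasure μ] {f : α → ℝ} (hf : Integrable f μ) (c : ℝ) :
    Integrable (fun x ↦ c * (1 + f x)) μ :=
  ((integrable_const 1).add hf).const_mul c

section JumpHamiltonian

variable {α E : Type*} [MeasurableSpace α] [Add E]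
  {μ : Measure α} {Z : α → ℝ} {J : α → E} {u v w g : E → ℝ} {M N : ℝ}

lemma abs_sub_translate_le (hw : ∀ q, 0 < w q) (hg : ∀ q y, w (q + y) ≤ g y * w q)
    (hu : ∀ q, |u q| ≤ M * w q) (q y : E) :
    |u q - u (q + y)| ≤ M * w q * (1 + g y) := by
  have hM : 0 ≤ M := nonneg_of_mul_nonneg_left ((abs_nonneg _).trans (hu q)) (hw q)
  calc |u q - u (q + y)| ≤ |u q| + |u (q + y)| := abs_sub _ _
    _ ≤ M * w q + M * w (q + y) := add_le_add (hu q) (hu (q + y))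
    _ ≤ M * w q + M * (g y * w q) := by gcongr; exact hg q y
    _ = M * w q * (1 + g y) := by ring

variable [IsFiniteMeasure μ]

lemma integral_abs_sub_translate_le (hw : ∀ q, 0 < w q) (hg : ∀ q y, w (q + y) ≤ g y * w q)
    (hgJ : Integrable (fun x ↦ g (J x)) μ) (hu : ∀ q, |u q| ≤ M * w q) (q : E) :
    ∫ x, |u q - u (q + J x)| ∂μ ≤ (μ.real Set.univ + ∫ x, g (J x) ∂μ) * (M * w q) := by
  calc ∫ x, |u q - u (q + J x)| ∂μ
      ≤ ∫ x, M * w q * (1 + g (J x)) ∂μ :=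
        integral_mono_of_nonneg (.of_forall fun x ↦ abs_nonneg _)
          (integrable_const_mul_one_add hgJ _)
          (.of_forall fun x ↦ abs_sub_translate_le hw hg hu q (J x))
    _ = (μ.real Set.univ + ∫ x, g (J x) ∂μ) * (M * w q) := by
        rw [integral_const_mul, integral_add (integrable_const 1) hgJ, integral_const,
          smul_eq_mul, mul_one, mul_comm]

variable [MeasurableSpace E] [MeasurableAdd E]

lemma integrable_sub_translate (hw : ∀ q, 0 < w q) (hg : ∀ q y, w (q + y) ≤ g y * w q)
    (hJ : Measurable J) (hgJ : Integrable (fun x ↦ g (J x)) μ) (hum : Measurable u)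
    (hu : ∀ q, |u q| ≤ M * w q) (q : E) : Integrable (fun x ↦ u q - u (q + J x)) μ :=
  (integrable_const_mul_one_add hgJ (M * w q)).mono'
    (measurable_const.sub (hum.comp (hJ.const_add q))).aestronglyMeasurable
    (.of_forall fun x ↦ abs_sub_translate_le hw hg hu q (J x))

lemma abs_jumpHamiltonian_sub_le {H : ℝ → ℝ} {L : NNReal} {Mu Mv : ℝ} (hH : LipschitzWith L H)
    (hw : ∀ q, 0 < w q) (hg : ∀ q y, w (q + y) ≤ g y * w q)
    (hZ : Integrable Z μ) (hJ : Measurable J) (hgJ : Integrable (fun x ↦ g (J x)) μ)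
    (hum : Measurable u) (hu : ∀ q, |u q| ≤ Mu * w q)
    (hvm : Measurable v) (hv : ∀ q, |v q| ≤ Mv * w q)
    (huv : ∀ q, |u q - v q| ≤ N * w q) (q : E) :
    |jumpHamiltonian H μ Z J u q - jumpHamiltonian H μ Z J v q| ≤
      L * (μ.real Set.univ + ∫ x, g (J x) ∂μ) * (N * w q) := by
  calc |jumpHamiltonian H μ Z J u q - jumpHamiltonian H μ Z J v q|
      ≤ L * ∫ x, |(u q - u (q + J x)) - (v q - v (q + J x))| ∂μ :=
        abs_integral_perspective_sub_le hH hZ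
          (integrable_sub_translate hw hg hJ hgJ hum hu q)
          (integrable_sub_translate hw hg hJ hgJ hvm hv q)
    _ = L * ∫ x, |(u q - v q) - (u (q + J x) - v (q + J x))| ∂μ := by
        simp only [sub_sub_sub_comm]
    _ ≤ L * ((μ.real Set.univ + ∫ x, g (J x) ∂μ) * (N * w q)) := by
        gcongr
        exact integral_abs_sub_translate_le (u := fun q ↦ u q - v q) hw hg hgJ huv q
    _ = L * (μ.real Set.univ + ∫ x, g (J x) ∂μ) * (N * w q) := by ring

end JumpHamiltonian

section WeightedSpace

variable {d : ℕ} {π u v : EuclideanSpace ℝ (Fin d) → ℝ}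

lemma InCpi.sub (hu : InCpi π u) (hv : InCpi π v) : InCpi π (fun q ↦ u q - v q) := by
  obtain ⟨huc, M, hM⟩ := hu
  obtain ⟨hvc, N, hN⟩ := hv
  refine ⟨huc.sub hvc, M + N, fun q ↦ ?_⟩
  rw [add_mul]
  exact (abs_sub _ _).trans (add_le_add (hM q) (hN q))

lemma InCpi.abs_le_normPi_mul (hπ : ∀ q, 0 ≤ π q) (hu : InCpi π u)
    (q : EuclideanSpace ℝ (Fin d)) : |u q| ≤ normPi π u * (1 + π q) := by
  obtain ⟨-, M, hM⟩ := hu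
  have hpos (q) : 0 < 1 + π q := add_pos_of_pos_of_nonneg one_pos (hπ q)
  have hbdd : BddAbove (Set.range fun q ↦ |u q| / (1 + π q)) :=
    ⟨M, Set.forall_mem_range.mpr fun q ↦ (div_le_iff₀ (hpos q)).mpr (hM q)⟩
  exact (div_le_iff₀ (hpos q)).mp (le_ciSup hbdd q)

lemma normPi_le {M : ℝ} (hπ : ∀ q, 0 ≤ π q) (hu : ∀ q, |u q| ≤ M * (1 + π q)) :
    normPi π u ≤ M :=
  ciSup_le fun q ↦ (div_le_iff₀ (add_pos_of_pos_of_nonneg one_pos (hπ q))).mpr (hu q)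

end WeightedSpace

lemma Fop_eq_sub_sum_jumpHamiltonian (d : ℕ) (ψ : EuclideanSpace ℝ (Fin d) → ℝ)
    (Hb Ha : Fin d → ℝ → ℝ) (μb μa : Fin d → Measure ℝ)
    (u : EuclideanSpace ℝ (Fin d) → ℝ) (q : EuclideanSpace ℝ (Fin d)) :
    Fop d ψ Hb Ha μb μa u q =
      ψ q
        - ∑ i, jumpHamiltonian (Hb i) (μb i) id (fun z ↦ z • EuclideanSpace.single i (1 : ℝ)) u q
        - ∑ i, jumpHamiltonian (Ha i) (μa i) id
            (fun z ↦ -(z • EuclideanSpace.single i (1 : ℝ))) u q := by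
  simp only [Fop, jumpHamiltonian, perspective, id, ← sub_eq_add_neg]

lemma abs_Fop_sub_le {d : ℕ} (ψ : EuclideanSpace ℝ (Fin d) → ℝ) {Hb Ha : Fin d → ℝ → ℝ}
    {μb μa : Fin d → Measure ℝ} {u v : EuclideanSpace ℝ (Fin d) → ℝ}
    {q : EuclideanSpace ℝ (Fin d)} {cb ca : Fin d → ℝ} {B : ℝ}
    (hb : ∀ i,
      |jumpHamiltonian (Hb i) (μb i) id (fun z ↦ z • EuclideanSpace.single i (1 : ℝ)) u q -
        jumpHamiltonian (Hb i) (μb i) id (fun z ↦ z • EuclideanSpace.single i (1 : ℝ)) v q| ≤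
      cb i * B)
    (ha : ∀ i,
      |jumpHamiltonian (Ha i) (μa i) id (fun z ↦ -(z • EuclideanSpace.single i (1 : ℝ))) u q -
        jumpHamiltonian (Ha i) (μa i) id (fun z ↦ -(z • EuclideanSpace.single i (1 : ℝ))) v q| ≤
      ca i * B) :
    |Fop d ψ Hb Ha μb μa u q - Fop d ψ Hb Ha μb μa v q| ≤ (∑ i, cb i + ∑ i, ca i) * B := by
  rw [Fop_eq_sub_sum_jumpHamiltonian, Fop_eq_sub_sum_jumpHamiltonian, ← Real.dist_eq, add_mul,
    Finset.sum_mul, Finset.sum_mul]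
  refine (dist_sub_sub_le _ _ _ _).trans ?_
  rw [dist_sub_left]
  exact add_le_add (dist_sum_sum_le_of_le _ fun i _ ↦ hb i)
    (dist_sum_sum_le_of_le _ fun i _ ↦ ha i)

theorem Fop_lipschitz_general {d : ℕ} (ψ : EuclideanSpace ℝ (Fin d) → ℝ)
    {Hb Ha : Fin d → ℝ → ℝ} {Lb La : Fin d → NNReal}
    (hHb : ∀ i, LipschitzWith (Lb i) (Hb i)) (hHa : ∀ i, LipschitzWith (La i) (Ha i))
    {μb μa : Fin d → Measure ℝ} [∀ i, IsFiniteMeasure (μb i)] [∀ i, IsFiniteMeasure (μa i)]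
    (hμb : ∀ i, Integrable id (μb i)) (hμa : ∀ i, Integrable id (μa i))
    {π g : EuclideanSpace ℝ (Fin d) → ℝ} (hπ : ∀ q, 0 ≤ π q)
    (hg : ∀ q y, 1 + π (q + y) ≤ g y * (1 + π q))
    (hgb : ∀ i, Integrable (fun z : ℝ ↦ g (z • EuclideanSpace.single i (1 : ℝ))) (μb i))
    (hga : ∀ i, Integrable (fun z : ℝ ↦ g (-(z • EuclideanSpace.single i (1 : ℝ)))) (μa i)) :
    ∃ K : ℝ, 0 < K ∧
      ∀ u v : EuclideanSpace ℝ (Fin d) → ℝ, InCpi π u → InCpi π v →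
        normPi π (fun q ↦ Fop d ψ Hb Ha μb μa u q - Fop d ψ Hb Ha μb μa v q) ≤
          K * normPi π (fun q ↦ u q - v q) := by
  set K := ∑ i, Lb i * ((μb i).real Set.univ +
      ∫ z, g (z • EuclideanSpace.single i (1 : ℝ)) ∂μb i) +
    ∑ i, La i * ((μa i).real Set.univ +
      ∫ z, g (-(z • EuclideanSpace.single i (1 : ℝ))) ∂μa i)
  refine ⟨max K 1, lt_max_of_lt_right one_pos, fun u v hu hv ↦ normPi_le hπ fun q ↦ ?_⟩
  have hpos (q) : 0 < 1 + π q := add_pos_of_pos_of_nonneg one_pos (hπ q)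
  have hum := hu.1.measurable
  have hvm := hv.1.measurable
  have hule := hu.abs_le_normPi_mul hπ
  have hvle := hv.abs_le_normPi_mul hπ
  have huv := (hu.sub hv).abs_le_normPi_mul hπ
  set N := normPi π fun q ↦ u q - v q
  have hN : 0 ≤ N * (1 + π q) := (abs_nonneg _).trans (huv q)
  calc |Fop d ψ Hb Ha μb μa u q - Fop d ψ Hb Ha μb μa v q|
      ≤ K * (N * (1 + π q)) := abs_Fop_sub_le ψ
        (fun i ↦ abs_jumpHamiltonian_sub_le (hHb i) hpos hg (hμb i) (by fun_prop) (hgb i)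
          hum hule hvm hvle huv q)
        (fun i ↦ abs_jumpHamiltonian_sub_le (hHa i) hpos hg (hμa i) (by fun_prop) (hga i)
          hum hule hvm hvle huv q)
    _ ≤ max K 1 * (N * (1 + π q)) := by gcongr; exact le_max_left _ _
    _ = max K 1 * N * (1 + π q) := by ring

section Moments

variable {μ : Measure ℝ} [IsFiniteMeasure μ] {p : ℕ}

lemma integrable_id_of_integrable_pow (hp : 1 ≤ p) (hμ : Integrable (fun z : ℝ ↦ z ^ p) μ) :
    Integrable id μ := by
  have hpow : Integrable (fun z : ℝ ↦ ‖z‖ ^ p) μ := by simpa only [norm_pow] using hμ.norm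
  have hnorm : Integrable (fun z : ℝ ↦ ‖z‖) μ := by
    simpa only [pow_one, id] using integrable_norm_pow_of_le aestronglyMeasurable_id hp hpow
  exact (integrable_norm_iff aestronglyMeasurable_id).mp hnorm

lemma integrable_const_mul_one_add_norm_smul_pow {E : Type*} [SeminormedAddCommGroup E]
    [NormedSpace ℝ E] (hμ : Integrable (fun z : ℝ ↦ z ^ p) μ) (C : ℝ) (e : E) :
    Integrable (fun z : ℝ ↦ C * (1 + ‖z • e‖ ^ p)) μ := by
  have hpow : Integrable (fun z : ℝ ↦ ‖z • e‖ ^ p) μ := by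
    simpa only [norm_smul, mul_pow, norm_pow] using hμ.norm.mul_const (‖e‖ ^ p)
  exact integrable_const_mul_one_add hpow C

end Moments

/-- The map `F : C_π → C_π` is Lipschitz continuous: there exists `K > 0` such that
`‖F(u) − F(v)‖_π ≤ K ‖u − v‖_π` for all `u, v ∈ C_π`. -/
theorem Fop_lipschitz (d : ℕ) (hd : 1 ≤ d)
    (Hb Ha : Fin d → ℝ → ℝ) (Lb La : Fin d → NNReal)
    (hHb : ∀ i, LipschitzWith (Lb i) (Hb i)) (hHa : ∀ i, LipschitzWith (La i) (Ha i))
    (μb μa : Fin d → Measure ℝ)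
    [∀ i, IsProbabilityMeasure (μb i)] [∀ i, IsProbabilityMeasure (μa i)]
    (hμb0 : ∀ i, μb i (Set.Iic 0) = 0) (hμa0 : ∀ i, μa i (Set.Iic 0) = 0)
    (π : EuclideanSpace ℝ (Fin d) → ℝ) (hπc : Continuous π) (hπ0 : ∀ q, 0 ≤ π q)
    (p : ℕ) (hp : 1 ≤ p) (C : ℝ) (hC : 0 < C)
    (hπ1 : ∀ q, π q ≤ C * (1 + ‖q‖ ^ p))
    (hπ2 : ∀ q y : EuclideanSpace ℝ (Fin d),
      (1 + π (q + y)) / (1 + π q) ≤ C * (1 + ‖y‖ ^ p))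
    (hmomb : ∀ i, Integrable (fun z : ℝ => z ^ p) (μb i))
    (hmoma : ∀ i, Integrable (fun z : ℝ => z ^ p) (μa i))
    (ψ : EuclideanSpace ℝ (Fin d) → ℝ) (hψ : InCpi π ψ) :
    ∃ K : ℝ, 0 < K ∧
      ∀ u v : EuclideanSpace ℝ (Fin d) → ℝ, InCpi π u → InCpi π v →
        normPi π (fun q => Fop d ψ Hb Ha μb μa u q - Fop d ψ Hb Ha μb μa v q) ≤
          K * normPi π (fun q => u q - v q) :=
  Fop_lipschitz_general (g := fun y ↦ C * (1 + ‖y‖ ^ p)) ψ hHb hHa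
    (fun i ↦ integrable_id_of_integrable_pow hp (hmomb i))
    (fun i ↦ integrable_id_of_integrable_pow hp (hmoma i)) hπ0
    (fun q y ↦ (div_le_iff₀ (add_pos_of_pos_of_nonneg one_pos (hπ0 q))).mp (hπ2 q y))
    (fun i ↦ integrable_const_mul_one_add_norm_smul_pow (hmomb i) C _)
    (fun i ↦ by
      simpa only [norm_neg] using integrable_const_mul_one_add_norm_smul_pow (hmoma i) C _)
end

section
/- Under the standing assumptions (H^{i,b}, H^{i,a} : ℝ → ℝ globally Lipschitz; μ^{i,b}, μ^{i,a} probability measures on (0,+∞) with finite p-th moments; π : ℝᵈ → ℝ₊ continuous with π(q) ≤ C(1+‖q‖ᵖ) and (1+π(q+y))/(1+π(q)) ≤ C(1+‖y‖ᵖ); ψ, ℓ_d ∈ C_π), for every T > 0 there exists a unique continuously differentiable curve W : [0,T] → C_π satisfying the terminal value problem W'(t) = F(W(t)) for all t ∈ [0,T] and W(T) = −ℓ_d, where F(u)(q) = ψ(q) − Σᵢ ∫₀^∞ z H^{i,b}((u(q) − u(q+z eⁱ))/z) μ^{i,b}(dz) − Σᵢ ∫₀^∞ z H^{i,a}((u(q)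 − u(q−z eⁱ))/z) μ^{i,a}(dz). Equivalently, w(t,q) = W(t)(q) is the unique classical solution (in the class C¹([0,T], C_π)) of the integro-differential Hamilton–Jacobi equation 0 = ∂_t w(t,q) − ψ(q) + Σᵢ ∫₀^∞ z H^{i,b}((w(t,q) − w(t,q+z eⁱ))/z) μ^{i,b}(dz) + Σᵢ ∫₀^∞ z H^{i,a}((w(t,q) − w(t,q−z eⁱ))/z) μ^{i,a}(dz) with terminal condition w(T,q) = −ℓ_d(q) for all q ∈ ℝᵈ. -/
open MeasureTheory

/-- `w : [0,T] → C_π` is a classical (`C¹([0,T], C_π)`) solution of the terminal value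
problem `W'(t) = F(W(t))`, `W(T) = −ℓ_d`, i.e. of the integro-differential
Hamilton–Jacobi equation (3) of the paper: for every `t ∈ [0,T]`, `w(t,·) ∈ C_π`, the
difference quotients `(w(s,·) − w(t,·))/(s−t)` converge to `F(w(t,·))` in `‖·‖_π` as
`s → t` in `[0,T]`, and `w(T,·) = −ℓ_d`. -/
def IsHJSolution (d : ℕ) (T : ℝ) (π ψ ℓd : EuclideanSpace ℝ (Fin d) → ℝ)
    (Hb Ha : Fin d → ℝ → ℝ) (μb μa : Fin d → Measure ℝ)
    (w : ℝ → EuclideanSpace ℝ (Fin d) → ℝ) : Prop :=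
  (∀ t ∈ Set.Icc (0 : ℝ) T, InCpi π (w t)) ∧
  (∀ t ∈ Set.Icc (0 : ℝ) T,
    Filter.Tendsto
      (fun s : ℝ =>
        normPi π (fun q => (w s q - w t q) / (s - t) - Fop d ψ Hb Ha μb μa (w t) q))
      (nhdsWithin t (Set.Icc (0 : ℝ) T \ {t})) (nhds 0)) ∧
  (∀ q, w T q = -ℓd q)

/-!
The map `v ↦ (1 + π) v` identifies `C_π` isometrically with the Banach space of bounded continuous
functions. For every `z ≠ 0`, the perspective `x ↦ z H(x / z)` has the same Lipschitz constant as
`H`, so neither small nor large jumps spoil the Lipschitz bound: with the growth condition on `π`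
and the moments of the measures, `F` is globally Lipschitz on `C_π`, and the terminal value problem
is an ordinary differential equation in a Banach space. On all of `[0, T]` at once, the Picard map
is a contraction for the supremum norm weighted by `exp (-c |t - T|)` with `c` larger than the
Lipschitz constant (Bielecki), which gives existence; uniqueness is Grönwall's inequality.
-/

open Set Filter Topology BoundedContinuousFunction
open scoped NNReal

section CauchyLipschitz

lemma abs_integral_exp_mul_abs_sub_le {c : ℝ} (hc : 0 < c) (t₀ t : ℝ) :
    |∫ τ in t₀..t, Real.exp (c * |τ - t₀|)| ≤ Real.exp (c * |t - t₀|) / c := by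
  have integral_le : ∀ s, 0 ≤ s → ∫ τ in (0 : ℝ)..s, Real.exp (c * |τ|) ≤ Real.exp (c * s) / c := by
    intro s hs
    calc ∫ τ in (0 : ℝ)..s, Real.exp (c * |τ|) = ∫ τ in (0 : ℝ)..s, Real.exp (c * τ) := by
          refine intervalIntegral.integral_congr fun τ hτ => ?_
          rw [uIcc_of_le hs] at hτ
          simp only [abs_of_nonneg hτ.1]
      _ = (Real.exp (c * s) - 1) / c := by
          rw [intervalIntegral.integral_comp_mul_left _ hc.ne', integral_exp]
          simp [div_eq_inv_mul]
      _ ≤ Real.exp (c * s) / c := by gcongr; linarith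
  have integral_nonneg : ∀ s, 0 ≤ s → 0 ≤ ∫ τ in (0 : ℝ)..s, Real.exp (c * |τ|) := fun s hs =>
    intervalIntegral.integral_nonneg hs fun τ _ => (Real.exp_pos _).le
  rw [intervalIntegral.integral_comp_sub_right (fun s => Real.exp (c * |s|)), sub_self]
  rcases le_total 0 (t - t₀) with h | h
  · rw [abs_of_nonneg (integral_nonneg _ h), abs_of_nonneg h]
    exact integral_le _ h
  · have reflect := intervalIntegral.integral_comp_neg (a := 0) (b := -(t - t₀))
      fun s => Real.exp (c * |s|)
    simp only [abs_neg, neg_neg, neg_zero] at reflect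
    rw [intervalIntegral.integral_symm, ← reflect, abs_neg,
      abs_of_nonneg (integral_nonneg _ (neg_nonneg.2 h)), abs_of_nonpos h]
    exact integral_le _ (neg_nonneg.2 h)

lemma continuousOn_uncurry_of_lipschitzWith {X Y Z : Type*} [TopologicalSpace X]
    [PseudoEMetricSpace Y] [PseudoEMetricSpace Z] {f : X → Y → Z} {s : Set X} {K : ℝ≥0}
    (hf : ∀ x ∈ s, LipschitzWith K (f x)) (hfc : ∀ y, ContinuousOn (fun x => f x y) s) :
    ContinuousOn (Function.uncurry f) (s ×ˢ univ) :=
  continuousOn_prod_of_continuousOn_lipschitzOnWith' _ K (fun x hx => (hf x hx).lipschitzOnWith)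
    fun y _ => hfc y

variable {E : Type*} [NormedAddCommGroup E] [NormedSpace ℝ E]
  {f : ℝ → E → E} {K : ℝ≥0} {a b : ℝ}

/-- The curve `t ↦ exp (c |t - t₀|) α t`, with `α` extended by constants beyond `[a, b]`. In the
unknown `α`, the sup norm is Bielecki's exponentially weighted norm of the curve. -/
noncomputable def expWeightedCurve (c : ℝ) (t₀ : Icc a b) (α : C(Icc a b, E)) (t : ℝ) : E :=
  Real.exp (c * |t - t₀|) • IccExtend (t₀.2.1.trans t₀.2.2) α t

lemma continuous_expWeightedCurve (c : ℝ) (t₀ : Icc a b) (α : C(Icc a b, E)) :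
    Continuous (expWeightedCurve c t₀ α) :=
  Continuous.smul (by fun_prop) α.continuous.Icc_extend'

lemma dist_expWeightedCurve_le (c : ℝ) (t₀ : Icc a b) (α β : C(Icc a b, E)) (t : ℝ) :
    dist (expWeightedCurve c t₀ α t) (expWeightedCurve c t₀ β t) ≤
      Real.exp (c * |t - t₀|) * dist α β := by
  rw [expWeightedCurve, expWeightedCurve, dist_smul₀, Real.norm_of_nonneg (Real.exp_pos _).le]
  gcongr
  exact ContinuousMap.dist_apply_le_dist _

lemma continuousOn_comp_expWeightedCurve (hf : ∀ t ∈ Icc a b, LipschitzWith K (f t))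
    (hfc : ∀ x, ContinuousOn (fun t => f t x) (Icc a b)) (c : ℝ) (t₀ : Icc a b)
    (α : C(Icc a b, E)) : ContinuousOn (fun t => f t (expWeightedCurve c t₀ α t)) (Icc a b) :=
  ODE.continuousOn_comp (continuousOn_uncurry_of_lipschitzWith hf hfc)
    (continuous_expWeightedCurve c t₀ α).continuousOn (mapsTo_univ _ _)

lemma dist_picard_expWeightedCurve_le (hf : ∀ t ∈ Icc a b, LipschitzWith K (f t))
    (hfc : ∀ x, ContinuousOn (fun t => f t x) (Icc a b)) {c : ℝ} (hc : 0 < c) (t₀ : Icc a b)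
    (x₀ : E) (α β : C(Icc a b, E)) (t : Icc a b) :
    dist (ODE.picard f t₀ x₀ (expWeightedCurve c t₀ α) t)
      (ODE.picard f t₀ x₀ (expWeightedCurve c t₀ β) t) ≤
      Real.exp (c * |t.1 - t₀|) * (K / c * dist α β) := by
  have integrable : ∀ γ : C(Icc a b, E),
      IntervalIntegrable (fun τ => f τ (expWeightedCurve c t₀ γ τ)) volume t₀ t := fun γ =>
    ((continuousOn_comp_expWeightedCurve hf hfc c t₀ γ).mono
      (uIcc_subset_Icc t₀.2 t.2)).intervalIntegrable
  have integrand_le : ∀ τ ∈ uIoc t₀.1 t,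
      ‖f τ (expWeightedCurve c t₀ α τ) - f τ (expWeightedCurve c t₀ β τ)‖ ≤
        K * dist α β * Real.exp (c * |τ - t₀|) := by
    intro τ hτ
    have τ_mem : τ ∈ Icc a b := uIcc_subset_Icc t₀.2 t.2 (uIoc_subset_uIcc hτ)
    calc _ ≤ K * dist (expWeightedCurve c t₀ α τ) (expWeightedCurve c t₀ β τ) := by
          rw [← dist_eq_norm]
          exact (hf τ τ_mem).dist_le_mul _ _
      _ ≤ K * (Real.exp (c * |τ - t₀|) * dist α β) := by
          gcongr
          exact dist_expWeightedCurve_le c t₀ α β τ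
      _ = _ := by ring
  rw [ODE.picard_apply, ODE.picard_apply, dist_add_left, dist_eq_norm,
    ← intervalIntegral.integral_sub (integrable α) (integrable β)]
  calc _ ≤ |∫ τ in t₀.1..t, K * dist α β * Real.exp (c * |τ - t₀|)| :=
        intervalIntegral.norm_integral_le_abs_of_norm_le
          (ae_restrict_of_forall_mem measurableSet_uIoc integrand_le)
          (Continuous.intervalIntegrable (by fun_prop) _ _)
    _ = K * dist α β * |∫ τ in t₀.1..t, Real.exp (c * |τ - t₀|)| := by
        rw [intervalIntegral.integral_const_mul, abs_mul, abs_of_nonneg (by positivity)]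
    _ ≤ K * dist α β * (Real.exp (c * |t.1 - t₀|) / c) := by
        gcongr
        exact abs_integral_exp_mul_abs_sub_le hc _ _
    _ = _ := by ring

lemma eqOn_Icc_of_isIntegralCurveOn_of_eq_right {γ γ' : ℝ → E}
    (hf : ∀ t ∈ Icc a b, LipschitzWith K (f t)) (hγ : IsIntegralCurveOn γ f (Icc a b))
    (hγ' : IsIntegralCurveOn γ' f (Icc a b)) (hb : γ b = γ' b) : EqOn γ γ' (Icc a b) := by
  have left_deriv : ∀ {δ : ℝ → E}, IsIntegralCurveOn δ f (Icc a b) →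
      ∀ t ∈ Ioc a b, HasDerivWithinAt δ (f t (δ t)) (Iic t) t := fun hδ t ht =>
    (hδ t (Ioc_subset_Icc_self ht)).mono_of_mem_nhdsWithin (Icc_mem_nhdsLE_of_mem ht)
  exact ODE_solution_unique_of_mem_Icc_left (s := fun _ => univ)
    (fun t ht => (hf t (Ioc_subset_Icc_self ht)).lipschitzOnWith)
    hγ.continuousOn (left_deriv hγ) (fun _ _ => mem_univ _)
    hγ'.continuousOn (left_deriv hγ') (fun _ _ => mem_univ _) hb

variable [CompleteSpace E]

lemma hasDerivWithinAt_picard_expWeightedCurve (hf : ∀ t ∈ Icc a b, LipschitzWith K (f t))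
    (hfc : ∀ x, ContinuousOn (fun t => f t x) (Icc a b)) (c : ℝ) (t₀ : Icc a b) (x₀ : E)
    (α : C(Icc a b, E)) {t : ℝ} (ht : t ∈ Icc a b) :
    HasDerivWithinAt (ODE.picard f t₀ x₀ (expWeightedCurve c t₀ α))
      (f t (expWeightedCurve c t₀ α t)) (Icc a b) t := by
  have hf_uncurry : ContinuousOn (Function.uncurry f) (Icc a b ×ˢ univ) :=
    continuousOn_uncurry_of_lipschitzWith hf hfc
  exact ODE.hasDerivWithinAt_picard_Icc t₀.2 hf_uncurry
    (continuous_expWeightedCurve c t₀ α).continuousOn (fun _ _ => mem_univ _) x₀ ht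

lemma exists_expWeightedCurve_eq_picard (hf : ∀ t ∈ Icc a b, LipschitzWith K (f t))
    (hfc : ∀ x, ContinuousOn (fun t => f t x) (Icc a b)) (t₀ : Icc a b) (x₀ : E) :
    ∃ (c : ℝ) (α : C(Icc a b, E)), EqOn (expWeightedCurve c t₀ α)
      (ODE.picard f t₀ x₀ (expWeightedCurve c t₀ α)) (Icc a b) := by
  set c : ℝ := K + 1
  have c_pos : 0 < c := by positivity
  let P (α : C(Icc a b, E)) : C(Icc a b, E) :=
    ⟨fun t => Real.exp (-(c * |t.1 - t₀|)) • ODE.picard f t₀ x₀ (expWeightedCurve c t₀ α) t,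
      Continuous.smul (by fun_prop) (continuousOn_iff_continuous_domRestrict.1 fun _ ht =>
        (hasDerivWithinAt_picard_expWeightedCurve hf hfc c t₀ x₀ α ht).continuousWithinAt)⟩
  have P_contracting : ContractingWith (K / (K + 1)) P := by
    refine ⟨(div_lt_one (by positivity)).2 (lt_add_one K), LipschitzWith.of_dist_le_mul ?_⟩
    intro α β
    refine (ContinuousMap.dist_le (by positivity)).2 fun t => ?_
    calc dist (P α t) (P β t) ≤ Real.exp (-(c * |t.1 - t₀|)) *
          (Real.exp (c * |t.1 - t₀|) * (K / c * dist α β)) := by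
          simp only [P, ContinuousMap.coe_mk, dist_smul₀, Real.norm_of_nonneg (Real.exp_pos _).le]
          gcongr
          exact dist_picard_expWeightedCurve_le hf hfc c_pos t₀ x₀ α β t
      _ = K / c * dist α β := by rw [← mul_assoc, ← Real.exp_add, neg_add_cancel, Real.exp_zero,
          one_mul]
      _ = _ := by simp [c]
  obtain ⟨α, hα⟩ : ∃ α, P α = α := ⟨_, P_contracting.fixedPoint_isFixedPt⟩
  refine ⟨c, α, fun t ht => ?_⟩
  have fixed : α ⟨t, ht⟩ = P α ⟨t, ht⟩ := by rw [hα]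
  rw [expWeightedCurve, IccExtend_of_mem _ _ ht, fixed]
  simp only [P, ContinuousMap.coe_mk, smul_smul, ← Real.exp_add, add_neg_cancel, Real.exp_zero,
    one_smul]

theorem exists_isIntegralCurveOn_Icc_of_lipschitzWith
    (hf : ∀ t ∈ Icc a b, LipschitzWith K (f t))
    (hfc : ∀ x, ContinuousOn (fun t => f t x) (Icc a b)) (t₀ : Icc a b) (x₀ : E) :
    ∃ γ : ℝ → E, γ t₀ = x₀ ∧ IsIntegralCurveOn γ f (Icc a b) := by
  obtain ⟨c, α, hα⟩ := exists_expWeightedCurve_eq_picard hf hfc t₀ x₀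
  exact ⟨_, (hα t₀.2).trans ODE.picard_apply₀, fun t ht =>
    (hasDerivWithinAt_picard_expWeightedCurve hf hfc c t₀ x₀ α ht).congr hα (hα ht)⟩

end CauchyLipschitz

section WeightedSpace

variable {X : Type*} [TopologicalSpace X] {π : X → ℝ}

/-- For `0 ≤ π`, the isometry `v ↦ (1 + π) v` from the bounded continuous functions onto `C_π`,
with values in the space of all functions. -/
def weighted (π : X → ℝ) : (X →ᵇ ℝ) →ₗ[ℝ] (X → ℝ) where
  toFun v q := v q * (1 + π q)
  map_add' v v' := by ext q; simp [add_mul]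
  map_smul' c v := by ext q; simp [mul_assoc]

lemma weighted_apply (v : X →ᵇ ℝ) (q : X) : weighted π v q = v q * (1 + π q) := rfl

lemma weighted_injective (hπ0 : ∀ q, 0 ≤ π q) : Function.Injective (weighted π) := by
  intro v v' h
  ext q
  have weight_ne_zero : 1 + π q ≠ 0 := by linarith [hπ0 q]
  exact mul_right_cancel₀ weight_ne_zero (congrFun h q)

lemma continuous_weighted (hπc : Continuous π) (v : X →ᵇ ℝ) : Continuous (weighted π v) :=
  v.continuous.mul (continuous_const.add hπc)

lemma abs_weighted_le (hπ0 : ∀ q, 0 ≤ π q) (v : X →ᵇ ℝ) (q : X) :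
    |weighted π v q| ≤ ‖v‖ * (1 + π q) := by
  have weight_nonneg : 0 ≤ 1 + π q := by linarith [hπ0 q]
  rw [weighted_apply, abs_mul, abs_of_nonneg weight_nonneg]
  exact mul_le_mul_of_nonneg_right (v.norm_coe_le_norm q) weight_nonneg

lemma norm_le_of_abs_weighted_le (hπ0 : ∀ q, 0 ≤ π q) {v : X →ᵇ ℝ} {M : ℝ} (hM : 0 ≤ M)
    (h : ∀ q, |weighted π v q| ≤ M * (1 + π q)) : ‖v‖ ≤ M := by
  refine (BoundedContinuousFunction.norm_le hM).2 fun q => ?_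
  have weight_pos : 0 < 1 + π q := by linarith [hπ0 q]
  have hq := h q
  rw [weighted_apply, abs_mul, abs_of_pos weight_pos] at hq
  exact le_of_mul_le_mul_right hq weight_pos

lemma abs_weighted_sub_weighted_le (hπ0 : ∀ q, 0 ≤ π q) (v : X →ᵇ ℝ) {q q' : X} {b : ℝ}
    (hb : 1 + π q' ≤ b * (1 + π q)) :
    |weighted π v q - weighted π v q'| ≤ ‖v‖ * (1 + b) * (1 + π q) :=
  calc _ ≤ |weighted π v q| + |weighted π v q'| := abs_sub _ _
    _ ≤ ‖v‖ * (1 + π q) + ‖v‖ * (1 + π q') :=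
        add_le_add (abs_weighted_le hπ0 v q) (abs_weighted_le hπ0 v q')
    _ ≤ ‖v‖ * (1 + π q) + ‖v‖ * (b * (1 + π q)) := by gcongr
    _ = _ := by ring

lemma exists_weighted_eq (hπc : Continuous π) (hπ0 : ∀ q, 0 ≤ π q) {u : X → ℝ}
    (hu : Continuous u) {M : ℝ} (hM : ∀ q, |u q| ≤ M * (1 + π q)) : ∃ v, weighted π v = u := by
  have weight_pos : ∀ q, 0 < 1 + π q := fun q => by linarith [hπ0 q]
  refine ⟨ofNormedAddCommGroup (fun q => u q / (1 + π q))
    (hu.div (continuous_const.add hπc) fun q => (weight_pos q).ne') M fun q => ?_, ?_⟩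
  · rw [Real.norm_eq_abs, abs_div, abs_of_pos (weight_pos q), div_le_iff₀ (weight_pos q)]
    exact hM q
  · ext q
    exact div_mul_cancel₀ _ (weight_pos q).ne'

/-- The operators on functions whose restriction to `C_π` is a Lipschitz map from `C_π` to itself:
those conjugate through `weighted π` to a Lipschitz map of the bounded continuous functions. -/
def lipschitzOperators (π : X → ℝ) : AddSubgroup ((X → ℝ) → X → ℝ) where
  carrier := {Φ | ∃ (K : ℝ≥0) (G : (X →ᵇ ℝ) → X →ᵇ ℝ),
    LipschitzWith K G ∧ ∀ v, weighted π (G v) = Φ (weighted π v)}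
  zero_mem' := ⟨0, 0, LipschitzWith.const 0, fun _ => map_zero _⟩
  add_mem' := by
    rintro Φ Ψ ⟨K, G, hG, hGΦ⟩ ⟨K', G', hG', hGΨ⟩
    exact ⟨K + K', G + G', hG.add hG', fun v => by simp [hGΦ, hGΨ]⟩
  neg_mem' := by
    rintro Φ ⟨K, G, hG, hGΦ⟩
    exact ⟨K, -G, hG.neg, fun v => by simp [hGΦ]⟩

lemma mem_lipschitzOperators {Φ : (X → ℝ) → X → ℝ} :
    Φ ∈ lipschitzOperators π ↔ ∃ (K : ℝ≥0) (G : (X →ᵇ ℝ) → X →ᵇ ℝ),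
      LipschitzWith K G ∧ ∀ v, weighted π (G v) = Φ (weighted π v) :=
  Iff.rfl

lemma const_mem_lipschitzOperators (v : X →ᵇ ℝ) :
    (fun _ => weighted π v) ∈ lipschitzOperators π :=
  ⟨0, fun _ => v, LipschitzWith.const v, fun _ => rfl⟩

lemma mem_lipschitzOperators_of_abs_sub_le (hπ0 : ∀ q, 0 ≤ π q) {Φ : (X → ℝ) → X → ℝ}
    (hΦ : ∀ v, ∃ v', weighted π v' = Φ (weighted π v)) (K : ℝ≥0)
    (hK : ∀ v v' q,
      |Φ (weighted π v) q - Φ (weighted π v') q| ≤ K * ‖v - v'‖ * (1 + π q)) :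
    Φ ∈ lipschitzOperators π := by
  choose G hG using hΦ
  refine ⟨K, G, LipschitzWith.of_dist_le_mul fun v v' => ?_, hG⟩
  rw [dist_eq_norm, dist_eq_norm]
  refine norm_le_of_abs_weighted_le hπ0 (by positivity) fun q => ?_
  rw [map_sub, Pi.sub_apply, hG, hG]
  exact hK v v' q

end WeightedSpace

section JumpOperator

lemma lipschitzWith_mul_comp_div {H : ℝ → ℝ} {L : ℝ≥0} (hH : LipschitzWith L H) {z : ℝ}
    (hz : z ≠ 0) : LipschitzWith L fun x => z * H (x / z) := by
  refine LipschitzWith.of_dist_le_mul fun x y => ?_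
  calc dist (z * H (x / z)) (z * H (y / z)) = |z| * dist (H (x / z)) (H (y / z)) := by
        rw [Real.dist_eq, Real.dist_eq, ← mul_sub, abs_mul]
    _ ≤ |z| * (L * dist (x / z) (y / z)) := by
        gcongr
        exact hH.dist_le_mul _ _
    _ = L * dist x y := by
        rw [Real.dist_eq, Real.dist_eq, ← sub_div, abs_div]
        field_simp

lemma integrable_mul_one_add_add_mul_abs {μ : Measure ℝ} [IsFiniteMeasure μ] {B : ℝ → ℝ}
    (hBμ : Integrable B μ) (hμ1 : Integrable (fun z : ℝ => z) μ) (M N : ℝ) :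
    Integrable (fun z => M * (1 + B z) + N * |z|) μ :=
  (((integrable_const 1).add hBμ).const_mul M).add (hμ1.abs.const_mul N)

variable {E : Type*} [SeminormedAddCommGroup E] [NormedSpace ℝ E] {π : E → ℝ} {H : ℝ → ℝ} {L : ℝ≥0}
  {μ : Measure ℝ} {e : E} {B : ℝ → ℝ}

/-- The integrand of a jump term of the Hamilton–Jacobi equation, for jumps of size `z` in
direction `e`. -/
noncomputable def jumpIntegrand (H : ℝ → ℝ) (e : E) (u : E → ℝ) (q : E) (z : ℝ) : ℝ :=
  z * H ((u q - u (q + z • e)) / z)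

/-- A jump term of the Hamilton–Jacobi equation, as a nonlinear nonlocal operator in `u`. Bid terms
have `e = eⁱ` and ask terms `e = -eⁱ`. -/
noncomputable def jumpOperator (H : ℝ → ℝ) (μ : Measure ℝ) (e : E) (u : E → ℝ) (q : E) : ℝ :=
  ∫ z, jumpIntegrand H e u q z ∂μ

lemma abs_jumpIntegrand_sub_le (hH : LipschitzWith L H) (hπ0 : ∀ q, 0 ≤ π q)
    (hB : ∀ q z, 1 + π (q + z • e) ≤ B z * (1 + π q)) (v v' : E →ᵇ ℝ) (q : E) {z : ℝ}
    (hz : z ≠ 0) :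
    |jumpIntegrand H e (weighted π v) q z - jumpIntegrand H e (weighted π v') q z| ≤
      L * ‖v - v'‖ * (1 + π q) * (1 + B z) := by
  have increment_sub : weighted π v q - weighted π v (q + z • e) -
      (weighted π v' q - weighted π v' (q + z • e)) =
      weighted π (v - v') q - weighted π (v - v') (q + z • e) := by
    simp only [map_sub, Pi.sub_apply]
    ring
  calc _ ≤ L * |weighted π (v - v') q - weighted π (v - v') (q + z • e)| := by
        rw [← increment_sub]
        exact (lipschitzWith_mul_comp_div hH hz).dist_le_mul _ _
    _ ≤ L * (‖v - v'‖ * (1 + B z) * (1 + π q)) := by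
        gcongr
        exact abs_weighted_sub_weighted_le hπ0 _ (hB q z)
    _ = _ := by ring

lemma abs_jumpIntegrand_le (hH : LipschitzWith L H) (hπ0 : ∀ q, 0 ≤ π q)
    (hB : ∀ q z, 1 + π (q + z • e) ≤ B z * (1 + π q)) (v : E →ᵇ ℝ) (q : E) {z : ℝ}
    (hz : z ≠ 0) :
    |jumpIntegrand H e (weighted π v) q z| ≤
      (1 + π q) * (L * ‖v‖ * (1 + B z) + |H 0| * |z|) := by
  have at_zero : jumpIntegrand H e (weighted π 0) q z = z * H 0 := by
    simp [jumpIntegrand]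
  have sub_zero_le := abs_jumpIntegrand_sub_le hH hπ0 hB v 0 q hz
  rw [at_zero, sub_zero] at sub_zero_le
  calc |jumpIntegrand H e (weighted π v) q z|
      ≤ |jumpIntegrand H e (weighted π v) q z - z * H 0| + |z * H 0| := by
        simpa only [sub_add_cancel] using
          abs_add_le (jumpIntegrand H e (weighted π v) q z - z * H 0) (z * H 0)
    _ ≤ L * ‖v‖ * (1 + π q) * (1 + B z) + (1 + π q) * (|H 0| * |z|) := by
        refine add_le_add sub_zero_le ?_
        rw [abs_mul, mul_comm |z|]
        exact le_mul_of_one_le_left (by positivity) (by linarith [hπ0 q])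
    _ = _ := by ring

lemma aestronglyMeasurable_jumpIntegrand (hH : Continuous H) {u : E → ℝ} (hu : Continuous u)
    (q : E) : AEStronglyMeasurable (jumpIntegrand H e u q) μ := by
  have measurable_increment : Measurable fun z : ℝ => u q - u (q + z • e) :=
    Continuous.measurable (by fun_prop)
  exact (measurable_id.mul (hH.measurable.comp
    (measurable_increment.div measurable_id))).aestronglyMeasurable

lemma continuous_jumpIntegrand (hH : Continuous H) {u : E → ℝ} (hu : Continuous u) (z : ℝ) :
    Continuous fun q => jumpIntegrand H e u q z := by
  unfold jumpIntegrand
  fun_prop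

variable [IsFiniteMeasure μ]

lemma integrable_jumpIntegrand (hH : LipschitzWith L H) (hπc : Continuous π)
    (hπ0 : ∀ q, 0 ≤ π q) (hB : ∀ q z, 1 + π (q + z • e) ≤ B z * (1 + π q))
    (hBμ : Integrable B μ) (hμ1 : Integrable (fun z : ℝ => z) μ) (hμ0 : ∀ᵐ z ∂μ, z ≠ 0)
    (v : E →ᵇ ℝ) (q : E) : Integrable (jumpIntegrand H e (weighted π v) q) μ :=
  ((integrable_mul_one_add_add_mul_abs hBμ hμ1 _ _).const_mul _).mono'
    (aestronglyMeasurable_jumpIntegrand hH.continuous (continuous_weighted hπc v) q)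
    (hμ0.mono fun _ hz => abs_jumpIntegrand_le hH hπ0 hB v q hz)

lemma continuous_jumpOperator_weighted (hH : LipschitzWith L H) (hπc : Continuous π)
    (hπ0 : ∀ q, 0 ≤ π q) (hB : ∀ q z, 1 + π (q + z • e) ≤ B z * (1 + π q))
    (hBμ : Integrable B μ) (hμ1 : Integrable (fun z : ℝ => z) μ) (hμ0 : ∀ᵐ z ∂μ, z ≠ 0)
    (v : E →ᵇ ℝ) : Continuous (jumpOperator H μ e (weighted π v)) := by
  have hu := continuous_weighted hπc v
  refine continuous_iff_continuousAt.2 fun q₀ => continuousAt_of_dominated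
    (bound := fun z => (1 + (π q₀ + 1)) * (L * ‖v‖ * (1 + B z) + |H 0| * |z|))
    (.of_forall fun q => aestronglyMeasurable_jumpIntegrand hH.continuous hu q) ?_
    ((integrable_mul_one_add_add_mul_abs hBμ hμ1 _ _).const_mul _)
    (.of_forall fun z => (continuous_jumpIntegrand hH.continuous hu z).continuousAt)
  have π_lt : ∀ᶠ q in 𝓝 q₀, π q < π q₀ + 1 := hπc.continuousAt.eventually_lt_const (by linarith)
  filter_upwards [π_lt] with q hq
  filter_upwards [hμ0] with z hz
  have le_bound := abs_jumpIntegrand_le hH hπ0 hB v q hz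
  have bound_nonneg : 0 ≤ L * ‖v‖ * (1 + B z) + |H 0| * |z| :=
    nonneg_of_mul_nonneg_right ((abs_nonneg _).trans le_bound) (by linarith [hπ0 q])
  exact le_bound.trans (by gcongr)

lemma abs_jumpOperator_weighted_le (hH : LipschitzWith L H)
    (hπ0 : ∀ q, 0 ≤ π q) (hB : ∀ q z, 1 + π (q + z • e) ≤ B z * (1 + π q))
    (hBμ : Integrable B μ) (hμ1 : Integrable (fun z : ℝ => z) μ) (hμ0 : ∀ᵐ z ∂μ, z ≠ 0)
    (v : E →ᵇ ℝ) (q : E) :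
    |jumpOperator H μ e (weighted π v) q| ≤
      (∫ z, L * ‖v‖ * (1 + B z) + |H 0| * |z| ∂μ) * (1 + π q) := by
  rw [mul_comm, ← integral_const_mul, jumpOperator, ← Real.norm_eq_abs]
  exact norm_integral_le_of_norm_le ((integrable_mul_one_add_add_mul_abs hBμ hμ1 _ _).const_mul _)
    (hμ0.mono fun _ hz => abs_jumpIntegrand_le hH hπ0 hB v q hz)

lemma abs_jumpOperator_weighted_sub_le (hH : LipschitzWith L H) (hπc : Continuous π)
    (hπ0 : ∀ q, 0 ≤ π q) (hB : ∀ q z, 1 + π (q + z • e) ≤ B z * (1 + π q))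
    (hBμ : Integrable B μ) (hμ1 : Integrable (fun z : ℝ => z) μ) (hμ0 : ∀ᵐ z ∂μ, z ≠ 0)
    (v v' : E →ᵇ ℝ) (q : E) :
    |jumpOperator H μ e (weighted π v) q - jumpOperator H μ e (weighted π v') q| ≤
      L * ‖v - v'‖ * (1 + π q) * ∫ z, 1 + B z ∂μ := by
  have one_add_integrable : Integrable (fun z => 1 + B z) μ := (integrable_const 1).add hBμ
  have integrable := integrable_jumpIntegrand hH hπc hπ0 hB hBμ hμ1 hμ0
  rw [jumpOperator, jumpOperator, ← integral_sub (integrable v q) (integrable v' q),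
    ← integral_const_mul, ← Real.norm_eq_abs]
  exact norm_integral_le_of_norm_le (one_add_integrable.const_mul _)
    (hμ0.mono fun _ hz => abs_jumpIntegrand_sub_le hH hπ0 hB v v' q hz)

lemma jumpOperator_mem_lipschitzOperators (hH : LipschitzWith L H) (hπc : Continuous π)
    (hπ0 : ∀ q, 0 ≤ π q) (hB : ∀ q z, 1 + π (q + z • e) ≤ B z * (1 + π q))
    (hBμ : Integrable B μ) (hμ1 : Integrable (fun z : ℝ => z) μ) (hμ0 : ∀ᵐ z ∂μ, z ≠ 0) :
    jumpOperator H μ e ∈ lipschitzOperators π := by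
  refine mem_lipschitzOperators_of_abs_sub_le hπ0 (fun v => exists_weighted_eq hπc hπ0
    (continuous_jumpOperator_weighted hH hπc hπ0 hB hBμ hμ1 hμ0 v)
    (abs_jumpOperator_weighted_le hH hπ0 hB hBμ hμ1 hμ0 v))
    (L * (∫ z, 1 + B z ∂μ).toNNReal) fun v v' q => ?_
  have weight_pos : 0 < 1 + π q := by linarith [hπ0 q]
  calc _ ≤ L * ‖v - v'‖ * (1 + π q) * ∫ z, 1 + B z ∂μ :=
        abs_jumpOperator_weighted_sub_le hH hπc hπ0 hB hBμ hμ1 hμ0 v v' q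
    _ ≤ L * ‖v - v'‖ * (1 + π q) * (∫ z, 1 + B z ∂μ).toNNReal := by
        gcongr
        exact Real.le_coe_toNNReal _
    _ = _ := by push_cast; ring

end JumpOperator

section Moments

variable {p : ℕ}

lemma integrable_mul_one_add_norm_smul_pow {μ : Measure ℝ} [IsFiniteMeasure μ] {E : Type*}
    [SeminormedAddCommGroup E] [NormedSpace ℝ E] (hμp : Integrable (fun z : ℝ => z ^ p) μ)
    (C : ℝ) (e : E) : Integrable (fun z : ℝ => C * (1 + ‖z • e‖ ^ p)) μ := by
  have integrable_norm_pow : Integrable (fun z : ℝ => ‖z • e‖ ^ p) μ := by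
    simpa only [norm_smul, mul_pow, norm_pow] using hμp.norm.mul_const (‖e‖ ^ p)
  exact ((integrable_const 1).add integrable_norm_pow).const_mul C

lemma integrable_of_integrable_pow {Ω : Type*} [MeasurableSpace Ω] {μ : Measure Ω}
    [IsFiniteMeasure μ] {f : Ω → ℝ} (hf : AEStronglyMeasurable f μ) (hp : 1 ≤ p)
    (hfp : Integrable (fun ω => f ω ^ p) μ) : Integrable f μ := by
  have integrable_norm_pow : Integrable (fun ω => ‖f ω‖ ^ p) μ := by
    simpa only [norm_pow] using hfp.norm
  have integrable_norm : Integrable (fun ω => ‖f ω‖) μ := by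
    simpa only [pow_one] using integrable_norm_pow_of_le hf hp integrable_norm_pow
  exact (integrable_norm_iff hf).1 integrable_norm

end Moments

section HamiltonJacobi

variable {d : ℕ} {T : ℝ} {π ψ ℓd : EuclideanSpace ℝ (Fin d) → ℝ} {Hb Ha : Fin d → ℝ → ℝ}
  {μb μa : Fin d → Measure ℝ}

lemma inCpi_iff_exists_weighted_eq (hπc : Continuous π) (hπ0 : ∀ q, 0 ≤ π q)
    {u : EuclideanSpace ℝ (Fin d) → ℝ} : InCpi π u ↔ ∃ v, weighted π v = u := by
  constructor
  · rintro ⟨hu, M, hM⟩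
    exact exists_weighted_eq hπc hπ0 hu hM
  · rintro ⟨v, rfl⟩
    exact ⟨continuous_weighted hπc v, ‖v‖, abs_weighted_le hπ0 v⟩

lemma normPi_weighted (hπ0 : ∀ q, 0 ≤ π q) (v : EuclideanSpace ℝ (Fin d) →ᵇ ℝ) :
    normPi π (weighted π v) = ‖v‖ := by
  rw [v.norm_eq_iSup_norm, normPi]
  congr with q
  have weight_pos : 0 < 1 + π q := by linarith [hπ0 q]
  rw [weighted_apply, abs_mul, abs_of_pos weight_pos, Real.norm_eq_abs,
    mul_div_cancel_right₀ _ weight_pos.ne']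

lemma hasDerivWithinAt_iff_tendsto_normPi (hπ0 : ∀ q, 0 ≤ π q)
    {x : ℝ → EuclideanSpace ℝ (Fin d) →ᵇ ℝ} {x' : EuclideanSpace ℝ (Fin d) →ᵇ ℝ} {s : Set ℝ}
    {t : ℝ} :
    HasDerivWithinAt x x' s t ↔ Tendsto (fun r => normPi π fun q =>
      (weighted π (x r) q - weighted π (x t) q) / (r - t) - weighted π x' q)
      (𝓝[s \ {t}] t) (𝓝 0) := by
  rw [hasDerivWithinAt_iff_tendsto_slope, tendsto_iff_norm_sub_tendsto_zero]
  refine tendsto_congr fun r => ?_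
  rw [← normPi_weighted hπ0]
  congr with q
  simp [slope_def_module, div_eq_inv_mul]

lemma isHJSolution_iff_exists_isIntegralCurveOn (hπc : Continuous π) (hπ0 : ∀ q, 0 ≤ π q)
    {G : (EuclideanSpace ℝ (Fin d) →ᵇ ℝ) → EuclideanSpace ℝ (Fin d) →ᵇ ℝ}
    (hG : ∀ v, weighted π (G v) = Fop d ψ Hb Ha μb μa (weighted π v))
    {w : ℝ → EuclideanSpace ℝ (Fin d) → ℝ} :
    IsHJSolution d T π ψ ℓd Hb Ha μb μa w ↔ ∃ x : ℝ → EuclideanSpace ℝ (Fin d) →ᵇ ℝ,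
      (∀ t ∈ Icc 0 T, w t = weighted π (x t)) ∧
      IsIntegralCurveOn x (fun _ => G) (Icc 0 T) ∧ w T = -ℓd := by
  have deriv_iff : ∀ x : ℝ → EuclideanSpace ℝ (Fin d) →ᵇ ℝ,
      (∀ t ∈ Icc 0 T, w t = weighted π (x t)) → ∀ t ∈ Icc 0 T,
      (HasDerivWithinAt x (G (x t)) (Icc 0 T) t ↔ Tendsto (fun s => normPi π fun q =>
        (w s q - w t q) / (s - t) - Fop d ψ Hb Ha μb μa (w t) q)
        (𝓝[Icc 0 T \ {t}] t) (𝓝 0)) := by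
    intro x hx t ht
    rw [hasDerivWithinAt_iff_tendsto_normPi hπ0, hG, ← hx t ht]
    refine tendsto_congr' ?_
    filter_upwards [self_mem_nhdsWithin] with s hs
    rw [hx s hs.1]
  constructor
  · rintro ⟨hw, hderiv, hT⟩
    have lift : ∀ t ∈ Icc 0 T, ∃ v, w t = weighted π v := fun t ht =>
      ((inCpi_iff_exists_weighted_eq hπc hπ0).1 (hw t ht)).imp fun _ => Eq.symm
    choose! x hx using lift
    exact ⟨x, hx, fun t ht => (deriv_iff x hx t ht).2 (hderiv t ht), funext hT⟩
  · rintro ⟨x, hx, hderiv, hT⟩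
    exact ⟨fun t ht => (inCpi_iff_exists_weighted_eq hπc hπ0).2 ⟨x t, (hx t ht).symm⟩,
      fun t ht => (deriv_iff x hx t ht).1 (hderiv t ht), congrFun hT⟩

theorem existsUnique_isHJSolution_of_mem_lipschitzOperators (hπc : Continuous π)
    (hπ0 : ∀ q, 0 ≤ π q) (hF : Fop d ψ Hb Ha μb μa ∈ lipschitzOperators π) (hℓd : InCpi π ℓd)
    (hT : 0 ≤ T) :
    ∃ w, IsHJSolution d T π ψ ℓd Hb Ha μb μa w ∧
      ∀ w', IsHJSolution d T π ψ ℓd Hb Ha μb μa w' → ∀ t ∈ Icc 0 T, ∀ q, w' t q = w t q := by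
  obtain ⟨K, G, hG, hGF⟩ := mem_lipschitzOperators.1 hF
  have T_mem : T ∈ Icc 0 T := right_mem_Icc.2 hT
  obtain ⟨v, rfl⟩ := (inCpi_iff_exists_weighted_eq hπc hπ0).1 hℓd
  have solution_iff (w) := isHJSolution_iff_exists_isIntegralCurveOn (T := T)
    (ℓd := weighted π v) (w := w) hπc hπ0 hGF
  obtain ⟨x, hxT, hx⟩ := exists_isIntegralCurveOn_Icc_of_lipschitzWith (f := fun _ => G)
    (fun _ _ => hG) (fun _ => continuousOn_const) ⟨T, T_mem⟩ (-v)
  refine ⟨fun t => weighted π (x t), (solution_iff _).2 ⟨x, fun _ _ => rfl, hx, ?_⟩, ?_⟩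
  · rw [show x T = -v from hxT, map_neg]
  · intro w' hw' t ht q
    obtain ⟨y, hy, hycurve, hyT⟩ := (solution_iff w').1 hw'
    have terminal_eq : y T = x T := weighted_injective hπ0 <| by
      rw [← hy T T_mem, hyT, show x T = -v from hxT, map_neg]
    have y_eq_x : EqOn y x (Icc 0 T) :=
      eqOn_Icc_of_isIntegralCurveOn_of_eq_right (fun _ _ => hG) hycurve hx terminal_eq
    rw [hy t ht, y_eq_x ht]

lemma Fop_eq_sub_sum_jumpOperator : Fop d ψ Hb Ha μb μa = (fun _ => ψ) -
    ∑ i, jumpOperator (Hb i) (μb i) (EuclideanSpace.single i 1) -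
    ∑ i, jumpOperator (Ha i) (μa i) (-EuclideanSpace.single i 1) := by
  ext u q
  simp [Fop, jumpOperator, jumpIntegrand, Finset.sum_apply, sub_eq_add_neg]

lemma Fop_mem_lipschitzOperators {Lb La : Fin d → ℝ≥0} (hHb : ∀ i, LipschitzWith (Lb i) (Hb i))
    (hHa : ∀ i, LipschitzWith (La i) (Ha i))
    [∀ i, IsFiniteMeasure (μb i)] [∀ i, IsFiniteMeasure (μa i)]
    (hμb0 : ∀ i, μb i {0} = 0) (hμa0 : ∀ i, μa i {0} = 0)
    (hπc : Continuous π) (hπ0 : ∀ q, 0 ≤ π q) {B : EuclideanSpace ℝ (Fin d) → ℝ}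
    (hB : ∀ q y, 1 + π (q + y) ≤ B y * (1 + π q))
    (hBb : ∀ i, Integrable (fun z : ℝ => B (z • EuclideanSpace.single i 1)) (μb i))
    (hBa : ∀ i, Integrable (fun z : ℝ => B (z • -EuclideanSpace.single i 1)) (μa i))
    (hμb1 : ∀ i, Integrable (fun z : ℝ => z) (μb i))
    (hμa1 : ∀ i, Integrable (fun z : ℝ => z) (μa i)) (hψ : InCpi π ψ) :
    Fop d ψ Hb Ha μb μa ∈ lipschitzOperators π := by
  obtain ⟨v, rfl⟩ := (inCpi_iff_exists_weighted_eq hπc hπ0).1 hψ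
  rw [Fop_eq_sub_sum_jumpOperator]
  refine sub_mem (sub_mem (const_mem_lipschitzOperators v) (sum_mem fun i _ => ?_))
    (sum_mem fun i _ => ?_)
  · exact jumpOperator_mem_lipschitzOperators (hHb i) hπc hπ0 (fun q z => hB q _) (hBb i) (hμb1 i)
      (measure_eq_zero_iff_ae_notMem.1 (hμb0 i))
  · exact jumpOperator_mem_lipschitzOperators (hHa i) hπc hπ0 (fun q z => hB q _) (hBa i) (hμa1 i)
      (measure_eq_zero_iff_ae_notMem.1 (hμa0 i))

theorem HJ_existence_uniqueness_general {d : ℕ} {Hb Ha : Fin d → ℝ → ℝ} {Lb La : Fin d → ℝ≥0}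
    (hHb : ∀ i, LipschitzWith (Lb i) (Hb i)) (hHa : ∀ i, LipschitzWith (La i) (Ha i))
    {μb μa : Fin d → Measure ℝ} [∀ i, IsFiniteMeasure (μb i)] [∀ i, IsFiniteMeasure (μa i)]
    (hμb0 : ∀ i, μb i {0} = 0) (hμa0 : ∀ i, μa i {0} = 0)
    {π : EuclideanSpace ℝ (Fin d) → ℝ} (hπc : Continuous π) (hπ0 : ∀ q, 0 ≤ π q)
    {B : EuclideanSpace ℝ (Fin d) → ℝ} (hB : ∀ q y, 1 + π (q + y) ≤ B y * (1 + π q))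
    (hBb : ∀ i, Integrable (fun z : ℝ => B (z • EuclideanSpace.single i 1)) (μb i))
    (hBa : ∀ i, Integrable (fun z : ℝ => B (z • -EuclideanSpace.single i 1)) (μa i))
    (hμb1 : ∀ i, Integrable (fun z : ℝ => z) (μb i))
    (hμa1 : ∀ i, Integrable (fun z : ℝ => z) (μa i))
    {ψ ℓd : EuclideanSpace ℝ (Fin d) → ℝ} (hψ : InCpi π ψ) (hℓd : InCpi π ℓd)
    {T : ℝ} (hT : 0 ≤ T) :
    ∃ w, IsHJSolution d T π ψ ℓd Hb Ha μb μa w ∧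
      ∀ w', IsHJSolution d T π ψ ℓd Hb Ha μb μa w' → ∀ t ∈ Icc 0 T, ∀ q, w' t q = w t q :=
  existsUnique_isHJSolution_of_mem_lipschitzOperators hπc hπ0
    (Fop_mem_lipschitzOperators hHb hHa hμb0 hμa0 hπc hπ0 hB hBb hBa hμb1 hμa1 hψ) hℓd hT

end HamiltonJacobi

/-- Existence and uniqueness (Theorem 1 of the paper): the terminal value problem
`W'(t) = F(W(t))` on `[0,T]`, `W(T) = −ℓ_d`, has a unique solution in `C¹([0,T], C_π)`;
equivalently, the integro-differential Hamilton–Jacobi equation with terminal condition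
`w(T,·) = −ℓ_d` has a unique classical solution. -/
theorem HJ_existence_uniqueness (d : ℕ) (hd : 1 ≤ d)
    (Hb Ha : Fin d → ℝ → ℝ) (Lb La : Fin d → NNReal)
    (hHb : ∀ i, LipschitzWith (Lb i) (Hb i)) (hHa : ∀ i, LipschitzWith (La i) (Ha i))
    (μb μa : Fin d → Measure ℝ)
    [∀ i, IsProbabilityMeasure (μb i)] [∀ i, IsProbabilityMeasure (μa i)]
    (hμb0 : ∀ i, μb i (Set.Iic 0) = 0) (hμa0 : ∀ i, μa i (Set.Iic 0) = 0)
    (π : EuclideanSpace ℝ (Fin d) → ℝ) (hπc : Continuous π) (hπ0 : ∀ q, 0 ≤ π q)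
    (p : ℕ) (hp : 1 ≤ p) (C : ℝ) (hC : 0 < C)
    (hπ1 : ∀ q, π q ≤ C * (1 + ‖q‖ ^ p))
    (hπ2 : ∀ q y : EuclideanSpace ℝ (Fin d),
      (1 + π (q + y)) / (1 + π q) ≤ C * (1 + ‖y‖ ^ p))
    (hmomb : ∀ i, Integrable (fun z : ℝ => z ^ p) (μb i))
    (hmoma : ∀ i, Integrable (fun z : ℝ => z ^ p) (μa i))
    (ψ ℓd : EuclideanSpace ℝ (Fin d) → ℝ) (hψ : InCpi π ψ) (hℓd : InCpi π ℓd)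
    (T : ℝ) (hT : 0 < T) :
    ∃ w : ℝ → EuclideanSpace ℝ (Fin d) → ℝ,
      IsHJSolution d T π ψ ℓd Hb Ha μb μa w ∧
      ∀ w' : ℝ → EuclideanSpace ℝ (Fin d) → ℝ,
        IsHJSolution d T π ψ ℓd Hb Ha μb μa w' →
        ∀ t ∈ Set.Icc (0 : ℝ) T, ∀ q, w' t q = w t q := by
  have hπ (q y) : 1 + π (q + y) ≤ C * (1 + ‖y‖ ^ p) * (1 + π q) :=
    (div_le_iff₀ (by linarith [hπ0 q])).1 (hπ2 q y)
  have zero_subset : ({0} : Set ℝ) ⊆ Iic 0 := singleton_subset_iff.2 self_mem_Iic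
  exact HJ_existence_uniqueness_general hHb hHa
    (fun i => measure_mono_null zero_subset (hμb0 i))
    (fun i => measure_mono_null zero_subset (hμa0 i)) hπc hπ0 hπ
    (fun i => integrable_mul_one_add_norm_smul_pow (hmomb i) C _)
    (fun i => integrable_mul_one_add_norm_smul_pow (hmoma i) C _)
    (fun i => integrable_of_integrable_pow aestronglyMeasurable_id hp (hmomb i))
    (fun i => integrable_of_integrable_pow aestronglyMeasurable_id hp (hmoma i)) hψ hℓd hT.le
end
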